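/- arXiv:1108.2464 — 4 statements merged into one kernel-verified Lean document; each statement's English description precedes it below -/
import Mathlib

section
/- Let A = (a_{ij}) be an m × n real matrix and let B = (b_{ij}) be the (m+1) × (n+1) matrix defined by b_{ij} = a_{ij} for i ≤ m, j ≤ n; b_{i,n+1} = −∑_{k=1}^n a_{ik} for i ≤ m; b_{m+1,j} = −∑_{ℓ=1}^m a_{ℓj} for j ≤ n; and b_{m+1,n+1} = ∑_{ℓ=1}^m ∑_{k=1}^n a_{ℓk}. Then ‖A‖_cut = (1/4) ‖B‖_{∞→1}. -/
/-- The cut norm of an `m × n` real matrix. -/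
noncomputable def cutNorm {m n : ℕ} (B : Matrix (Fin m) (Fin n) ℝ) : ℝ :=
  sSup {x : ℝ | ∃ (S : Finset (Fin m)) (T : Finset (Fin n)),
    x = |∑ i ∈ S, ∑ j ∈ T, B i j|}

/-- The `ℓ∞ → ℓ1` operator norm of an `m × n` real matrix. -/
noncomputable def normInftyToOne {m n : ℕ} (B : Matrix (Fin m) (Fin n) ℝ) : ℝ :=
  sSup {x : ℝ | ∃ (ε : Fin m → ℝ) (δ : Fin n → ℝ),
    (∀ i, ε i = 1 ∨ ε i = -1) ∧ (∀ j, δ j = 1 ∨ δ j = -1) ∧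
    x = ∑ i, ∑ j, B i j * ε i * δ j}

theorem aux_identity {m n : ℕ}
    (A : Matrix (Fin m) (Fin n) ℝ) (B : Matrix (Fin (m + 1)) (Fin (n + 1)) ℝ)
    (hB₁ : ∀ (i : Fin m) (j : Fin n), B i.castSucc j.castSucc = A i j)
    (hB₂ : ∀ i : Fin m, B i.castSucc (Fin.last n) = -∑ k, A i k)
    (hB₃ : ∀ j : Fin n, B (Fin.last m) j.castSucc = -∑ l, A l j)
    (hB₄ : B (Fin.last m) (Fin.last n) = ∑ l, ∑ k, A l k)
    (ε : Fin (m + 1) → ℝ) (δ : Fin (n + 1) → ℝ) :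
    ∑ i, ∑ j, B i j * ε i * δ j =
      ∑ i : Fin m, ∑ j : Fin n, A i j * (ε i.castSucc - ε (Fin.last m)) *
        (δ j.castSucc - δ (Fin.last n)) := by
  have h3 : ∑ j : Fin n, (-∑ l, A l j) * ε (Fin.last m) * δ j.castSucc
      = ∑ i : Fin m, ∑ j : Fin n, -(A i j * ε (Fin.last m) * δ j.castSucc) := by
    rw [Finset.sum_comm]
    refine Finset.sum_congr rfl fun j _ => ?_
    rw [Finset.sum_neg_distrib, ← Finset.sum_mul, ← Finset.sum_mul]
    ring
  simp only [Fin.sum_univ_castSucc, hB₁, hB₂, hB₃, hB₄]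
  rw [h3, Finset.sum_mul, Finset.sum_mul, ← Finset.sum_add_distrib, ← Finset.sum_add_distrib]
  refine Finset.sum_congr rfl fun i _ => ?_
  rw [← Finset.sum_neg_distrib, Finset.sum_mul, Finset.sum_mul, Finset.sum_mul, Finset.sum_mul,
    ← Finset.sum_add_distrib, ← Finset.sum_add_distrib, ← Finset.sum_add_distrib]
  refine Finset.sum_congr rfl fun j _ => ?_
  ring

theorem aux_sum {m n : ℕ} (A : Matrix (Fin m) (Fin n) ℝ) (S : Finset (Fin m))
    (T : Finset (Fin n)) (u : Fin m → ℝ) (v : Fin n → ℝ) (a b : ℝ)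
    (hu : ∀ i, u i = if i ∈ S then a else 0) (hv : ∀ j, v j = if j ∈ T then b else 0) :
    ∑ i, ∑ j, A i j * u i * v j = a * b * ∑ i ∈ S, ∑ j ∈ T, A i j := by
  simp only [hu, hv, mul_ite, ite_mul, mul_zero, zero_mul, Finset.sum_ite_mem, Finset.univ_inter]
  rw [← Finset.sum_filter_add_sum_filter_not Finset.univ (fun i => i ∈ S)]
  rw [Finset.sum_eq_zero (s := Finset.univ.filter (fun i => ¬ i ∈ S))]
  · rw [add_zero, Finset.mul_sum]
    have : Finset.univ.filter (fun i => i ∈ S) = S := by ext; simp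
    rw [this]
    refine Finset.sum_congr rfl fun i hi => ?_
    rw [Finset.mul_sum]
    refine Finset.sum_congr rfl fun j _ => ?_
    rw [if_pos hi]; ring
  · intro i hi
    simp at hi
    simp [hi]

/-- If `B` is the `(m+1) × (n+1)` matrix obtained from `A` by appending one row and one
column making all row and column sums of `B` vanish, then `‖A‖_cut = (1/4)‖B‖_{∞→1}`. -/
theorem cutNorm_eq_quarter_normInftyToOne {m n : ℕ}
    (A : Matrix (Fin m) (Fin n) ℝ) (B : Matrix (Fin (m + 1)) (Fin (n + 1)) ℝ)
    (hB₁ : ∀ (i : Fin m) (j : Fin n), B i.castSucc j.castSucc = A i j)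
    (hB₂ : ∀ i : Fin m, B i.castSucc (Fin.last n) = -∑ k, A i k)
    (hB₃ : ∀ j : Fin n, B (Fin.last m) j.castSucc = -∑ l, A l j)
    (hB₄ : B (Fin.last m) (Fin.last n) = ∑ l, ∑ k, A l k) :
    cutNorm A = (1 / 4) * normInftyToOne B := by
  classical
  have hid := aux_identity A B hB₁ hB₂ hB₃ hB₄
  have hbd : BddAbove {x : ℝ | ∃ (S : Finset (Fin m)) (T : Finset (Fin n)),
      x = |∑ i ∈ S, ∑ j ∈ T, A i j|} := by
    refine ((Set.finite_range (fun p : Finset (Fin m) × Finset (Fin n) =>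
      |∑ i ∈ p.1, ∑ j ∈ p.2, A i j|)).subset ?_).bddAbove
    rintro x ⟨S, T, rfl⟩
    exact ⟨(S, T), rfl⟩
  have hup : ∀ y ∈ {x : ℝ | ∃ (ε : Fin (m + 1) → ℝ) (δ : Fin (n + 1) → ℝ),
      (∀ i, ε i = 1 ∨ ε i = -1) ∧ (∀ j, δ j = 1 ∨ δ j = -1) ∧
      x = ∑ i, ∑ j, B i j * ε i * δ j}, y ≤ 4 * cutNorm A := by
    rintro y ⟨ε, δ, hε, hδ, rfl⟩
    rw [hid, aux_sum A (Finset.univ.filter fun i => ε i.castSucc ≠ ε (Fin.last m))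
      (Finset.univ.filter fun j => δ j.castSucc ≠ δ (Fin.last n))
      (fun i => ε i.castSucc - ε (Fin.last m)) (fun j => δ j.castSucc - δ (Fin.last n))
      (-2 * ε (Fin.last m)) (-2 * δ (Fin.last n))]
    · have hle := le_csSup hbd ⟨Finset.univ.filter fun i => ε i.castSucc ≠ ε (Fin.last m),
        Finset.univ.filter fun j => δ j.castSucc ≠ δ (Fin.last n), rfl⟩
      change _ ≤ cutNorm A at hle
      have h1 := abs_le.1 hle
      rcases hε (Fin.last m) with h | h <;> rcases hδ (Fin.last n) with h' | h' <;>
        rw [h, h'] at h1 ⊢ <;> linarith [h1.1, h1.2]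
    · intro i
      rcases hε (Fin.last m) with h | h <;> rcases hε i.castSucc with h' | h' <;>
        simp [h, h'] <;> norm_num
    · intro i
      rcases hδ (Fin.last n) with h | h <;> rcases hδ i.castSucc with h' | h' <;>
        simp [h, h'] <;> norm_num
  have h1 : normInftyToOne B ≤ 4 * cutNorm A :=
    csSup_le ⟨_, fun _ => 1, fun _ => 1, fun _ => Or.inl rfl, fun _ => Or.inl rfl, rfl⟩ hup
  have h2 : cutNorm A ≤ 1 / 4 * normInftyToOne B := by
    refine csSup_le ⟨_, ∅, ∅, rfl⟩ ?_
    rintro x ⟨S, T, rfl⟩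
    obtain ⟨s, hs, hs'⟩ : ∃ s : ℝ, (s = 1 ∨ s = -1) ∧
        |∑ i ∈ S, ∑ j ∈ T, A i j| = s * ∑ i ∈ S, ∑ j ∈ T, A i j := by
      rcases abs_choice (∑ i ∈ S, ∑ j ∈ T, A i j) with h | h
      · exact ⟨1, Or.inl rfl, by rw [h, one_mul]⟩
      · exact ⟨-1, Or.inr rfl, by rw [h]; ring⟩
    let ε : Fin (m + 1) → ℝ := Fin.snoc (α := fun _ => ℝ) (fun i => if i ∈ S then -1 else 1) 1
    let δ : Fin (n + 1) → ℝ := Fin.snoc (α := fun _ => ℝ) (fun j => if j ∈ T then -s else s) s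
    have hle : ∑ i, ∑ j, B i j * ε i * δ j ≤ normInftyToOne B := by
      refine le_csSup ⟨_, hup⟩ ⟨ε, δ, ?_, ?_, rfl⟩
      · intro i
        refine Fin.lastCases ?_ (fun i => ?_) i
        · simp [ε]
        · by_cases h : i ∈ S <;> simp [ε, h]
      · intro j
        refine Fin.lastCases ?_ (fun j => ?_) j
        · simpa [δ] using hs
        · rcases hs with rfl | rfl <;> by_cases h : j ∈ T <;> simp [δ, h]
    rw [hid, aux_sum A S T _ _ (-2) (-2 * s)] at hle
    · rw [hs']; linarith
    · intro i
      by_cases h : i ∈ S <;> simp [ε, h]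
      norm_num
    · intro j
      by_cases h : j ∈ T <;> simp [δ, h]
      ring
  linarith
end

section
/- For every ε ∈ (0,1) and every m × n real matrix A = (a_{ij}) with |a_{ij}| ≤ 1 for all i, j, there exist an integer s ≤ ⌈1/ε²⌉ and cut matrices D_1, …, D_s such that ‖A − ∑_{k=1}^s D_k‖_cut ≤ ε m n. -/
/-- A matrix is a cut matrix if it is constant on some block `S × T` and zero elsewhere. -/
def IsCutMatrix {m n : ℕ} (D : Matrix (Fin m) (Fin n) ℝ) : Prop :=
  ∃ (S : Finset (Fin m)) (T : Finset (Fin n)) (d : ℝ),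
    ∀ i j, D i j = if i ∈ S ∧ j ∈ T then d else 0

theorem fk_energy {m n : ℕ} (B : Matrix (Fin m) (Fin n) ℝ) (S : Finset (Fin m))
    (T : Finset (Fin n)) (d : ℝ) :
    ∑ i, ∑ j, (B i j - if i ∈ S ∧ j ∈ T then d else 0) ^ 2 =
      ∑ i, ∑ j, B i j ^ 2 + (S.card * T.card * d ^ 2 - 2 * d * ∑ i ∈ S, ∑ j ∈ T, B i j) := by
  have h : ∀ i j, (B i j - if i ∈ S ∧ j ∈ T then d else 0) ^ 2 =
      B i j ^ 2 + if i ∈ S then (if j ∈ T then d ^ 2 - 2 * d * B i j else 0) else 0 := by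
    intro i j
    by_cases h1 : i ∈ S <;> by_cases h2 : j ∈ T <;> simp [h1, h2] <;> ring
  simp_rw [h, Finset.sum_add_distrib]
  congr 1
  have h2 : ∀ i, (∑ j, if i ∈ S then (if j ∈ T then d ^ 2 - 2 * d * B i j else 0) else 0) =
      if i ∈ S then ∑ j ∈ T, (d ^ 2 - 2 * d * B i j) else 0 := by
    intro i
    by_cases h1 : i ∈ S <;> simp [h1]
  simp_rw [h2]
  simp [Finset.sum_sub_distrib, Finset.mul_sum]
  ring

theorem fk_aux {m n : ℕ} (ε : ℝ) (hε : 0 < ε) (k : ℕ) :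
    ∀ B : Matrix (Fin m) (Fin n) ℝ, ∑ i, ∑ j, B i j ^ 2 ≤ k * (ε ^ 2 * (m * n)) →
    ∃ s : ℕ, s ≤ k ∧ ∃ D : Fin s → Matrix (Fin m) (Fin n) ℝ,
        (∀ k, IsCutMatrix (D k)) ∧ ∀ (S : Finset (Fin m)) (T : Finset (Fin n)),
          |∑ i ∈ S, ∑ j ∈ T, (B - ∑ k, D k) i j| ≤ ε * m * n := by
  induction k with
  | zero =>
    intro B hB
    refine ⟨0, le_rfl, Fin.elim0, fun k => k.elim0, fun S T => ?_⟩
    have h0 : ∀ i j, B i j = 0 := by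
      have h1 : ∑ i, ∑ j, B i j ^ 2 = 0 := le_antisymm (by simpa using hB) (by positivity)
      intro i j
      rw [Finset.sum_eq_zero_iff_of_nonneg (fun i _ => by positivity)] at h1
      have h2 := h1 i (Finset.mem_univ _)
      rw [Finset.sum_eq_zero_iff_of_nonneg (fun i _ => by positivity)] at h2
      simpa using h2 j (Finset.mem_univ _)
    simp [h0]
    positivity
  | succ k ih =>
    intro B hB
    by_cases hall : ∀ (S : Finset (Fin m)) (T : Finset (Fin n)),
        |∑ i ∈ S, ∑ j ∈ T, B i j| ≤ ε * m * n
    · exact ⟨0, Nat.zero_le _, Fin.elim0, fun k => k.elim0, fun S T => by simpa using hall S T⟩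
    push Not at hall
    obtain ⟨S, T, hST⟩ := hall
    set x := ∑ i ∈ S, ∑ j ∈ T, B i j with hx
    have hx0 : x ≠ 0 := by
      intro h
      rw [h, abs_zero] at hST
      exact absurd hST (not_lt.mpr (by positivity))
    have hS : 0 < (S.card : ℝ) := by
      rcases S.eq_empty_or_nonempty with h | h
      · exact absurd (by simp [hx, h]) hx0
      · exact_mod_cast h.card_pos
    have hT : 0 < (T.card : ℝ) := by
      rcases T.eq_empty_or_nonempty with h | h
      · exact absurd (by simp [hx, h]) hx0
      · exact_mod_cast h.card_pos
    have hSm : (S.card : ℝ) ≤ m := by exact_mod_cast (by simpa using S.card_le_univ)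
    have hTn : (T.card : ℝ) ≤ n := by exact_mod_cast (by simpa using T.card_le_univ)
    set d := x / (S.card * T.card) with hd
    let D0 : Matrix (Fin m) (Fin n) ℝ := fun i j => if i ∈ S ∧ j ∈ T then d else 0
    have hdec : ε ^ 2 * (m * n) ≤ x ^ 2 / (S.card * T.card) := by
      rw [le_div_iff₀ (by positivity)]
      have h1 : (S.card : ℝ) * T.card ≤ m * n := by gcongr
      have h2 : (ε * m * n) ^ 2 ≤ x ^ 2 := by
        rw [← sq_abs x]
        gcongr
      calc ε ^ 2 * (m * n) * (S.card * T.card) ≤ ε ^ 2 * (m * n) * (m * n) := by gcongr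
        _ = (ε * m * n) ^ 2 := by ring
        _ ≤ _ := h2
    have hE : ∑ i, ∑ j, (B - D0) i j ^ 2 ≤ k * (ε ^ 2 * (m * n)) := by
      have h := fk_energy B S T d
      rw [← hx] at h
      have h3 : S.card * T.card * d ^ 2 - 2 * d * x = - (x ^ 2 / (S.card * T.card)) := by
        rw [hd]; field_simp; ring
      rw [h3] at h
      have h4 : ∑ i, ∑ j, (B - D0) i j ^ 2 = _ := h
      rw [h4]
      push_cast at hB
      linarith
    obtain ⟨s, hs, D, hD, hc⟩ := ih _ hE
    refine ⟨s + 1, by omega, Fin.cons D0 D, ?_, ?_⟩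
    · intro k
      refine Fin.cases ?_ (fun k => ?_) k
      · exact ⟨S, T, d, fun i j => rfl⟩
      · simpa using hD k
    · intro S' T'
      have h : B - ∑ k, (Fin.cons D0 D : Fin (s + 1) → Matrix (Fin m) (Fin n) ℝ) k
          = B - D0 - ∑ k, D k := by
        rw [Fin.sum_univ_succ]
        simp [sub_sub]
      rw [h]
      exact hc S' T'

/-- Frieze–Kannan decomposition: every matrix with entries bounded by `1` is within cut
norm `ε m n` of a sum of at most `⌈1/ε²⌉` cut matrices. -/
theorem friezeKannan_decomposition {m n : ℕ} (ε : ℝ) (hε : ε ∈ Set.Ioo (0 : ℝ) 1)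
    (A : Matrix (Fin m) (Fin n) ℝ) (hA : ∀ i j, |A i j| ≤ 1) :
    ∃ s : ℕ, s ≤ ⌈1 / ε ^ 2⌉₊ ∧
      ∃ D : Fin s → Matrix (Fin m) (Fin n) ℝ,
        (∀ k, IsCutMatrix (D k)) ∧ cutNorm (A - ∑ k, D k) ≤ ε * m * n := by
  obtain ⟨h0, h1⟩ := hε
  have hE : ∑ i, ∑ j, A i j ^ 2 ≤ (⌈1 / ε ^ 2⌉₊ : ℝ) * (ε ^ 2 * (m * n)) := by
    have ha : ∑ i, ∑ j, A i j ^ 2 ≤ ∑ _i : Fin m, ∑ _j : Fin n, (1 : ℝ) := by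
      gcongr with i _ j _
      exact (sq_le_one_iff_abs_le_one _).mpr (hA i j)
    have hb : 1 ≤ (⌈1 / ε ^ 2⌉₊ : ℝ) * ε ^ 2 := by
      rw [← div_le_iff₀ (by positivity)]
      exact Nat.le_ceil _
    calc _ ≤ _ := ha
      _ = 1 * ((m : ℝ) * n) := by simp
      _ ≤ (⌈1 / ε ^ 2⌉₊ : ℝ) * ε ^ 2 * (m * n) := by gcongr
      _ = _ := by ring
  obtain ⟨s, hs, D, hD, hc⟩ := fk_aux ε h0 _ A hE
  refine ⟨s, hs, D, hD, ?_⟩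
  refine csSup_le ⟨_, ∅, ∅, rfl⟩ ?_
  rintro x ⟨S, T, rfl⟩
  exact hc S T
end

section
/- Let W be a skew-symmetric n × n real matrix (i.e., W(u,v) = −W(v,u) for all u, v) and let S, T ⊆ {1,…,n} be disjoint. Then there exist permutations σ¹ and σ² of {1,…,n} such that W(σ¹) + W(σ²) = 2 ∑_{u∈S, v∈T} W(u,v), where W(σ) = ∑_{1 ≤ u < v ≤ n} W(σ(u), σ(v)). -/
/-- `permVal W σ = ∑_{u < v} W (σ u) (σ v)`: the sum of the entries of `W` lying above the
diagonal after permuting rows and columns by `σ`. -/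
def permVal {n : ℕ} (W : Matrix (Fin n) (Fin n) ℝ) (σ : Equiv.Perm (Fin n)) : ℝ :=
  ∑ p ∈ Finset.univ.filter (fun p : Fin n × Fin n => p.1 < p.2), W (σ p.1) (σ p.2)

lemma permVal_of_key {n : ℕ} (W : Matrix (Fin n) (Fin n) ℝ) (f : Fin n → ℤ)
    (hf : Function.Injective f) :
    ∃ σ : Equiv.Perm (Fin n), permVal W σ = ∑ u, ∑ v, if f u < f v then W u v else 0 := by
  refine ⟨Tuple.sort f, ?_⟩
  have hm : StrictMono (f ∘ Tuple.sort f) :=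
    (Tuple.monotone_sort f).strictMono_of_injective (hf.comp (Tuple.sort f).injective)
  unfold permVal
  rw [Finset.sum_filter, Fintype.sum_prod_type]
  symm
  rw [← Equiv.sum_comp (Tuple.sort f)]
  refine Finset.sum_congr rfl fun u _ => ?_
  rw [← Equiv.sum_comp (Tuple.sort f)]
  refine Finset.sum_congr rfl fun v _ => ?_
  have h : f (Tuple.sort f u) < f (Tuple.sort f v) ↔ u < v := hm.lt_iff_lt
  simp only [h]

set_option maxHeartbeats 1000000 in
/-- For a skew-symmetric matrix `W` and disjoint `S, T ⊆ {1,…,n}`, there exist two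
permutations whose objective values sum to twice the `S × T` block sum of `W`. -/
theorem exists_two_perms_sum_eq_twice_block_sum {n : ℕ} (W : Matrix (Fin n) (Fin n) ℝ)
    (hW : ∀ u v, W u v = -W v u) (S T : Finset (Fin n)) (hST : Disjoint S T) :
    ∃ σ τ : Equiv.Perm (Fin n),
      permVal W σ + permVal W τ = 2 * ∑ u ∈ S, ∑ v ∈ T, W u v := by
  let f : Fin n → ℤ := fun u => if u ∈ S then (u : ℤ) else if u ∈ T then n + u else 2 * n + u
  let g : Fin n → ℤ := fun u => if u ∈ S then n - (u : ℤ) else if u ∈ T then 2 * n - u else - u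
  have hf : Function.Injective f := by
    intro u v h
    have := u.2
    have := v.2
    apply Fin.ext
    simp only [f] at h
    split_ifs at h <;> omega
  have hg : Function.Injective g := by
    intro u v h
    have := u.2
    have := v.2
    apply Fin.ext
    simp only [g] at h
    split_ifs at h <;> omega
  obtain ⟨σ, hσ⟩ := permVal_of_key W f hf
  obtain ⟨τ, hτ⟩ := permVal_of_key W g hg
  refine ⟨σ, τ, ?_⟩
  have hB : ∑ u ∈ S, ∑ v ∈ T, W u v = ∑ u, ∑ v, if u ∈ S ∧ v ∈ T then W u v else 0 := by
    simp [ite_and, Finset.sum_ite_mem]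
  rw [hσ, hτ, hB]
  let G : Fin n → Fin n → ℝ := fun u v => (if f u < f v then W u v else 0)
    + (if g u < g v then W u v else 0) - 2 * (if u ∈ S ∧ v ∈ T then W u v else 0)
  have hG : ∀ u v, G u v + G v u = 0 := by
    intro u v
    have hu := u.2
    have hv := v.2
    rcases eq_or_ne u v with rfl | hne
    · have h0 : W u u = 0 := by linarith [hW u u]
      simp [G, h0]
    have hne' : (u : ℕ) ≠ v := fun h => hne (Fin.ext h)
    have hu' : u ∈ S → u ∉ T := fun h => Finset.disjoint_left.mp hST h
    have hv' : v ∈ S → v ∉ T := fun h => Finset.disjoint_left.mp hST h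
    simp only [G, f, g, hW v u]
    by_cases a : u ∈ S <;> by_cases b : u ∈ T <;> by_cases c : v ∈ S <;> by_cases d : v ∈ T <;>
      first
      | exact absurd b (hu' a)
      | exact absurd d (hv' c)
      | (clear hu' hv'
         simp only [a, b, c, d, if_true, if_false, and_true, and_false]
         split_ifs <;> first | ring1 | (exfalso; omega))
  have hs : ∑ u, ∑ v, G u v = 0 := by
    have h1 : ∑ u, ∑ v, G u v + ∑ u, ∑ v, G v u = 0 := by
      simp only [← Finset.sum_add_distrib, hG, Finset.sum_const_zero]
    have h2 : ∑ u, ∑ v, G v u = ∑ u, ∑ v, G u v := Finset.sum_comm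
    linarith
  simp only [G, Finset.sum_sub_distrib, Finset.sum_add_distrib, ← Finset.mul_sum] at hs
  linarith
end

section
/- Let A = (a_{ij}) be an n × n real matrix whose diagonal entries vanish, let m ≥ 1 be an integer, and let M₁(A) = max{∑_{i=1}^n ∑_{j=1}^n a_{ij} t_i t_j : t ∈ ℝⁿ, ∑_{k=1}^n |t_k| ≤ 1}. Then there exists y ∈ ℝⁿ such that m·y_i ∈ ℤ for every i, ∑_{i=1}^n |y_i| ≤ 1, and ∑_{i=1}^n ∑_{j=1}^n a_{ij} y_i y_j ≥ (1 − 1/m) · M₁(A). -/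
theorem aux_lin {n : ℕ} (l : (Fin n → ℝ) →ₗ[ℝ] ℝ) (t : Fin n → ℝ) (ht : ∑ k, |t k| ≤ 1) :
    ∃ (i : Option (Fin n)) (e : ℤ), |e| ≤ 1 ∧
      l t ≤ l (fun j => if some j = i then (e : ℝ) else 0) := by
  by_cases h0 : l t ≤ 0
  · refine ⟨none, 0, by simp, ?_⟩
    have : (fun j : Fin n => if some j = none then ((0 : ℤ) : ℝ) else 0) = 0 := by
      ext j; simp
    rw [this, map_zero]; exact h0
  · push Not at h0
    have hl : l t = ∑ i, t i * l (Pi.single i 1) := by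
      conv_lhs => rw [LinearMap.pi_apply_eq_sum_univ l t]
      refine Finset.sum_congr rfl fun i _ => ?_
      rw [smul_eq_mul]
      congr 2
      ext j
      simp [Pi.single_apply, eq_comm]
    have hex : ∃ i, l t ≤ |l (Pi.single i 1)| := by
      by_contra hcon
      push Not at hcon
      have h1 : l t ≤ ∑ i, |t i| * |l (Pi.single i 1)| := by
        rw [hl]
        refine Finset.sum_le_sum fun i _ => ?_
        rw [← abs_mul]; exact le_abs_self _
      have hne : ∃ i, t i ≠ 0 := by
        by_contra hc
        push Not at hc
        rw [hl] at h0
        simp [hc] at h0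
      obtain ⟨i0, hi0⟩ := hne
      have h2 : ∑ i, |t i| * |l (Pi.single i 1)| < ∑ i, |t i| * l t := by
        refine Finset.sum_lt_sum (fun i _ => mul_le_mul_of_nonneg_left (hcon i).le (abs_nonneg _))
          ⟨i0, Finset.mem_univ _, mul_lt_mul_of_pos_left (hcon i0) (abs_pos.mpr hi0)⟩
      rw [← Finset.sum_mul] at h2
      nlinarith
    obtain ⟨i, hi⟩ := hex
    have key : ∀ e : ℤ, l (fun j => if some j = some i then (e : ℝ) else 0)
        = e * l (Pi.single i 1) := by
      intro e
      rw [← smul_eq_mul, ← map_smul]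
      congr 1
      ext j
      simp [Pi.single_apply]
    rcases le_total 0 (l (Pi.single i 1)) with h | h
    · refine ⟨some i, 1, by simp, ?_⟩
      rw [key]; rw [abs_of_nonneg h] at hi; simpa using hi
    · refine ⟨some i, -1, by simp, ?_⟩
      rw [key]; rw [abs_of_nonpos h] at hi; simpa using hi

theorem aux_ind {n : ℕ} (B : LinearMap.BilinForm ℝ (Fin n → ℝ))
    (hB : ∀ (i : Option (Fin n)) (e : ℝ), B (fun j => if some j = i then e else 0)
      (fun j => if some j = i then e else 0) = 0)
    (t : Fin n → ℝ) (ht : ∑ k, |t k| ≤ 1) (k : ℕ) :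
    ∀ s : Fin n → ℝ, ∃ z : Fin n → ℤ, ∑ i, |z i| ≤ k ∧
      B s s + k * (B s t + B t s) + k * (k - 1) * B t t
        ≤ B (s + fun i => (z i : ℝ)) (s + fun i => (z i : ℝ)) := by
  induction k with
  | zero =>
    intro s
    refine ⟨0, by simp, ?_⟩
    have : (s + fun i : Fin n => (((0 : Fin n → ℤ) i : ℤ) : ℝ)) = s := by ext; simp
    rw [this]; simp
  | succ k ih =>
    intro s
    obtain ⟨i, e, he, hl⟩ := aux_lin (B s + LinearMap.flip B s + (k : ℝ) • (B t + LinearMap.flip B t)) t ht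
    have hq := hB i e
    obtain ⟨z, hz, hle⟩ := ih (s + fun j => if some j = i then (e : ℝ) else 0)
    refine ⟨fun j => (if some j = i then e else 0) + z j, ?_, ?_⟩
    · have h1 : ∑ j, |if some j = i then e else 0| ≤ 1 := by
        cases i with
        | none => simp
        | some i => simpa [apply_ite abs] using he
      calc _ ≤ ∑ j, (|if some j = i then e else 0| + |z j|) :=
            Finset.sum_le_sum fun j _ => abs_add_le _ _
        _ ≤ _ := by rw [Finset.sum_add_distrib]; push_cast; linarith
    · have hv : (s + fun j => (((if some j = i then e else 0) + z j : ℤ) : ℝ))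
          = (s + fun j => if some j = i then (e : ℝ) else 0) + fun j => (z j : ℝ) := by
        ext j; simp [add_assoc]
      rw [hv]
      refine le_trans ?_ hle
      generalize (fun j => if some j = i then (e : ℝ) else 0) = v at *
      simp only [map_add, LinearMap.add_apply, LinearMap.smul_apply, LinearMap.flip_apply,
        smul_eq_mul] at hl ⊢
      push_cast
      linarith

/-- Alon's grid approximation for the `L₁` Grothendieck problem: for a matrix `A` with
vanishing diagonal and any integer `m ≥ 1`, there is a vector `y` with entries in `(1/m)ℤ`
and `ℓ₁` norm at most `1` whose quadratic form value is at least `(1 − 1/m) M₁(A)`. -/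
theorem exists_grid_vector_quadratic_form_ge {n : ℕ} (A : Matrix (Fin n) (Fin n) ℝ)
    (hdiag : ∀ i, A i i = 0) (m : ℕ) (hm : 1 ≤ m) :
    ∃ y : Fin n → ℝ, (∀ i, ∃ z : ℤ, (m : ℝ) * y i = (z : ℝ)) ∧ (∑ i, |y i|) ≤ 1 ∧
      (1 - 1 / (m : ℝ)) *
        sSup {x : ℝ | ∃ t : Fin n → ℝ, (∑ k, |t k|) ≤ 1 ∧
          x = ∑ i, ∑ j, A i j * t i * t j} ≤
        ∑ i, ∑ j, A i j * y i * y j := by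
  have hBA : ∀ u : Fin n → ℝ, ∑ i, ∑ j, A i j * u i * u j = Matrix.toBilin' A u u := by
    intro u
    rw [Matrix.toBilin'_apply]
    refine Finset.sum_congr rfl fun i _ => Finset.sum_congr rfl fun j _ => by ring
  have hcomp : IsCompact {t : Fin n → ℝ | ∑ k, |t k| ≤ 1} := by
    refine Metric.isCompact_of_isClosed_isBounded
      (isClosed_le (by fun_prop) continuous_const) ?_
    refine (Metric.isBounded_closedBall (x := (0 : Fin n → ℝ)) (r := 1)).subset ?_
    intro t ht
    rw [mem_closedBall_zero_iff, pi_norm_le_iff_of_nonneg zero_le_one]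
    intro i
    exact le_trans (Finset.single_le_sum (f := fun k => |t k|) (fun k _ => abs_nonneg _)
      (Finset.mem_univ i)) ht
  obtain ⟨t, ht, hmax⟩ := hcomp.exists_isMaxOn ⟨0, by simp⟩
    (f := fun t : Fin n → ℝ => ∑ i, ∑ j, A i j * t i * t j) (by fun_prop)
  have hsup : sSup {x : ℝ | ∃ t : Fin n → ℝ, (∑ k, |t k|) ≤ 1 ∧
          x = ∑ i, ∑ j, A i j * t i * t j} ≤ Matrix.toBilin' A t t := by
    refine csSup_le ⟨_, t, ht, rfl⟩ ?_
    rintro x ⟨u, hu, rfl⟩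
    rw [← hBA t]
    exact hmax hu
  obtain ⟨z, hz, hle⟩ := aux_ind (Matrix.toBilin' A) (by
    intro i e
    rw [Matrix.toBilin'_apply]
    cases i with
    | none => simp
    | some i => simp [hdiag]) t ht m 0
  have hm0 : (0 : ℝ) < m := by exact_mod_cast hm
  have hm1 : (1 : ℝ) ≤ m := by exact_mod_cast hm
  refine ⟨(m : ℝ)⁻¹ • (fun i => (z i : ℝ)), fun i => ⟨z i, ?_⟩, ?_, ?_⟩
  · simp [hm0.ne']
  · have : ((∑ i, |z i| : ℤ) : ℝ) ≤ m := by exact_mod_cast hz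
    push_cast at this
    simp only [Pi.smul_apply, smul_eq_mul, abs_mul, abs_inv, Nat.abs_cast]
    rw [← Finset.mul_sum, inv_mul_le_iff₀ hm0]
    simpa using this
  · rw [hBA]
    simp only [map_smul, LinearMap.smul_apply, smul_eq_mul]
    simp only [map_zero, LinearMap.zero_apply, zero_add, add_zero, mul_zero] at hle
    have hc : 0 ≤ 1 - 1 / (m : ℝ) := by
      rw [sub_nonneg, div_le_one hm0]; exact hm1
    refine le_trans (mul_le_mul_of_nonneg_left hsup hc) ?_
    rw [← mul_assoc, ← mul_inv, le_inv_mul_iff₀ (by positivity)]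
    refine le_trans (le_of_eq ?_) hle
    field_simp
end
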